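/- Let ξ = e^{2πi/3}, A = diag(ξ, ξ²), B₁ = [[0, −1],[−1, 0]], B₂ = [[0, 1],[1, 0]] in GL(2, ℂ), and let G₁ = ⟨A, B₁⟩ and G₂ = ⟨A, B₂⟩ be the subgroups they generate. Then: G₁ and G₂ are each isomorphic to the symmetric group on 3 letters (the dihedral group of order 6); G₁ ≠ G₂; neither G₁ nor G₂ contains −Id (so the projection π : GL(2, ℂ) → PGL(2, ℂ) is injective on each); π(G₁) = π(G₂); and for β = (x₀³ − 2x₁³)(x₁³ − 2x₀³) one has β∘g = β for every g ∈ G₁ ∪ G₂. (Lemma: if K = D_n is splitting then K = D₃ with β = (x₀³ − 2x₁³)(x₁³ − 2x₀³), and there are exactly two liftings ε₁, ε₂ : D₃ → D₆ ⊂ GL(2, ℂ).) -/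

import Mathlib

/-- `PGL(2, ℂ)`: the quotient of `GL(2, ℂ)` by its center (the nonzero scalar matrices). -/
abbrev PGL2C := GL (Fin 2) ℂ ⧸ Subgroup.center (GL (Fin 2) ℂ)

/-- The canonical projection `π : GL(2, ℂ) → PGL(2, ℂ)`. -/
def projGL2 : GL (Fin 2) ℂ →* PGL2C := QuotientGroup.mk' (Subgroup.center (GL (Fin 2) ℂ))

/-- `β ∘ g`: the polynomial obtained from `β` by substituting
`(g₀₀x₀ + g₀₁x₁, g₁₀x₀ + g₁₁x₁)` for `(x₀, x₁)`. -/
noncomputable def polyComp (g : GL (Fin 2) ℂ) (β : MvPolynomial (Fin 2) ℂ) :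
    MvPolynomial (Fin 2) ℂ :=
  MvPolynomial.aeval
    (fun i => ∑ j, MvPolynomial.C ((g : Matrix (Fin 2) (Fin 2) ℂ) i j) * MvPolynomial.X j) β

/-- The sextic `β = (x₀³ − 2x₁³)(x₁³ − 2x₀³)`. -/
noncomputable def bolzaSextic : MvPolynomial (Fin 2) ℂ :=
  (MvPolynomial.X 0 ^ 3 - 2 * MvPolynomial.X 1 ^ 3) *
    (MvPolynomial.X 1 ^ 3 - 2 * MvPolynomial.X 0 ^ 3)

/-!
Conjugation by an antidiagonal involution inverts `diag(ξ, ξ⁻¹)`, so `A` and `Bᵢ` satisfy the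
relations of the dihedral group of order 6, and no others, because `A` has order 3 and hence does
not commute with `Bᵢ`. This group has trivial center, so `Gᵢ` meets the scalar matrices only in the
identity. Since `B₁ = -B₂`, the two groups have the same image in `PGL(2, ℂ)`, whereas `G₁ = G₂`
would force `-1 = B₁ * B₂ ∈ G₂`.
-/

section DihedralPair

variable {G : Type*} [Group G] {n : ℕ} {a b : G}

/-- The homomorphism `i ↦ a ^ i` from the integers modulo `n`, for `a ^ n = 1`. -/
def zmodPowersHom (ha : a ^ n = 1) : Multiplicative (ZMod n) →* G :=
  (ZMod.lift n ⟨zmultiplesHom (Additive G) (.ofMul a), by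
    simp [← ofMul_pow, ha]⟩).toMultiplicativeLeft

theorem zmodPowersHom_ofAdd_intCast (ha : a ^ n = 1) (k : ℤ) :
    zmodPowersHom ha (.ofAdd (k : ZMod n)) = a ^ k := by
  simp [zmodPowersHom]

/-- The pair `(a, b)` satisfies the defining relations of the dihedral group of order `2 * n`, with
`a` as the rotation and `b` as the reflection. The order of `a` is only required to divide `n`;
as for `DihedralGroup`, the case `n = 0` is that of the infinite dihedral group. -/
structure IsDihedralPair (n : ℕ) (a b : G) : Prop where
  pow_eq_one : a ^ n = 1
  mul_self_eq_one : b * b = 1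
  semiconjBy_inv : SemiconjBy b a a⁻¹

namespace IsDihedralPair

theorem zpow_mul_eq_mul_zpow_neg (h : IsDihedralPair n a b) (k : ℤ) :
    a ^ k * b = b * a ^ (-k) := by
  simpa using (h.semiconjBy_inv.zpow_right (-k)).eq.symm

/-- The homomorphism from the dihedral group that sends `r 1` to `a` and `sr 0` to `b`. -/
def lift (h : IsDihedralPair n a b) : DihedralGroup n →* G :=
  MonoidHom.mk'
    (fun
      | .r i => zmodPowersHom h.pow_eq_one (.ofAdd i)
      | .sr i => b * zmodPowersHom h.pow_eq_one (.ofAdd i))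
    (by
      rintro (i | i) (j | j) <;>
        obtain ⟨k, rfl⟩ := ZMod.intCast_surjective i <;>
        obtain ⟨l, rfl⟩ := ZMod.intCast_surjective j
      · simp
      · simp only [DihedralGroup.r_mul_sr, ← Int.cast_sub, zmodPowersHom_ofAdd_intCast]
        rw [← mul_assoc, h.zpow_mul_eq_mul_zpow_neg, mul_assoc, ← zpow_add, neg_add_eq_sub]
      · simp [mul_assoc]
      · simp only [DihedralGroup.sr_mul_sr, ← Int.cast_sub, zmodPowersHom_ofAdd_intCast]
        rw [mul_assoc, ← mul_assoc (a ^ k), h.zpow_mul_eq_mul_zpow_neg, mul_assoc,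
          ← mul_assoc b, h.mul_self_eq_one, one_mul, ← zpow_add, neg_add_eq_sub])

theorem lift_r_intCast (h : IsDihedralPair n a b) (k : ℤ) : h.lift (.r k) = a ^ k :=
  zmodPowersHom_ofAdd_intCast h.pow_eq_one k

theorem lift_sr_intCast (h : IsDihedralPair n a b) (k : ℤ) : h.lift (.sr k) = b * a ^ k :=
  congrArg (b * ·) (zmodPowersHom_ofAdd_intCast h.pow_eq_one k)

theorem range_lift (h : IsDihedralPair n a b) : h.lift.range = Subgroup.closure {a, b} := by
  have a_mem : a ∈ Subgroup.closure {a, b} := Subgroup.subset_closure (by simp)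
  have b_mem : b ∈ Subgroup.closure {a, b} := Subgroup.subset_closure (by simp)
  apply le_antisymm
  · rintro _ ⟨i | i, rfl⟩ <;> obtain ⟨k, rfl⟩ := ZMod.intCast_surjective i
    · exact h.lift_r_intCast k ▸ zpow_mem a_mem k
    · exact h.lift_sr_intCast k ▸ mul_mem b_mem (zpow_mem a_mem k)
  · rw [Subgroup.closure_le, Set.pair_subset_iff]
    exact ⟨⟨.r (1 : ℤ), by simp [h.lift_r_intCast, -Int.cast_one]⟩,
      ⟨.sr (0 : ℤ), by simp [h.lift_sr_intCast, -Int.cast_zero]⟩⟩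

theorem notMem_zpowers (h : IsDihedralPair n a b) (ha : ¬ orderOf a ∣ 2) :
    b ∉ Subgroup.zpowers a := by
  rintro ⟨k, rfl⟩
  have a_eq_inv : a = a⁻¹ := mul_right_cancel ((Commute.self_zpow a k).trans h.semiconjBy_inv.eq)
  exact ha (orderOf_dvd_of_pow_eq_one (by rw [sq, ← eq_inv_iff_mul_eq_one, ← a_eq_inv]))

theorem lift_injective (h : IsDihedralPair n a b) (ha : orderOf a = n) (hn : ¬ n ∣ 2) :
    Function.Injective h.lift := by
  rw [injective_iff_map_eq_one]
  rintro (i | i) hi <;> obtain ⟨k, rfl⟩ := ZMod.intCast_surjective i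
  · rw [h.lift_r_intCast, ← orderOf_dvd_iff_zpow_eq_one, ha] at hi
    rw [(ZMod.intCast_zmod_eq_zero_iff_dvd k n).2 hi, DihedralGroup.r_zero]
  · rw [h.lift_sr_intCast, mul_eq_one_iff_eq_inv, ← zpow_neg] at hi
    exact absurd ⟨-k, hi.symm⟩ (h.notMem_zpowers (ha ▸ hn))

/-- The isomorphism from the subgroup generated by a dihedral pair to the dihedral group, when the
rotation has exact order `n`; for `n = 1` and `n = 2` the reflection could be a power of it. -/
noncomputable def closureEquiv (h : IsDihedralPair n a b) (ha : orderOf a = n) (hn : ¬ n ∣ 2) :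
    Subgroup.closure {a, b} ≃* DihedralGroup n :=
  (MulEquiv.subgroupCongr h.range_lift).symm.trans
    (MonoidHom.ofInjective (h.lift_injective ha hn)).symm

end IsDihedralPair

theorem isDihedralPair_finRotate_swap :
    IsDihedralPair 3 (finRotate 3) (Equiv.swap 0 (finRotate 3 0)) where
  pow_eq_one := by decide
  mul_self_eq_one := Equiv.swap_mul_self _ _
  semiconjBy_inv := by unfold SemiconjBy; decide

/-- The identification of the dihedral group of order 6 with the symmetric group on 3 letters. -/
noncomputable def dihedralGroupThreeEquivPerm : DihedralGroup 3 ≃* Equiv.Perm (Fin 3) :=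
  (isDihedralPair_finRotate_swap.closureEquiv
      (orderOf_eq_prime (by decide) (by decide)) (by decide)).symm.trans
    ((MulEquiv.subgroupCongr (Equiv.Perm.closure_cycle_adjacent_swap isCycle_finRotate
      support_finRotate 0)).trans Subgroup.topEquiv)

theorem disjoint_center_of_mulEquiv {K : Type*} [Group K] {H : Subgroup G} (e : H ≃* K)
    (hK : Subgroup.center K = ⊥) : Disjoint H (Subgroup.center G) := by
  rw [Subgroup.disjoint_def]
  intro g hg g_central
  have : (⟨g, hg⟩ : H) ∈ Subgroup.center H :=
    Subgroup.mem_center_iff.2 fun x => Subtype.ext (Subgroup.mem_center_iff.1 g_central x)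
  have : e ⟨g, hg⟩ ∈ Subgroup.center K := (MulEquivClass.apply_mem_center_iff e).2 this
  rw [hK, Subgroup.mem_bot, map_eq_one_iff e e.injective] at this
  exact congrArg Subtype.val this

namespace IsDihedralPair

theorem disjoint_closure_center (h : IsDihedralPair n a b) (ha : orderOf a = n) (hn : Odd n)
    (hn_one : n ≠ 1) : Disjoint (Subgroup.closure {a, b}) (Subgroup.center G) := by
  have not_dvd_two : ¬ n ∣ 2 := fun hdvd =>
    hn_one (Nat.eq_one_of_dvd_one (hn.coprime_two_right.dvd_of_dvd_mul_left (by simpa using hdvd)))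
  exact disjoint_center_of_mulEquiv (h.closureEquiv ha not_dvd_two)
    (DihedralGroup.center_eq_bot_of_odd_ne_one hn hn_one)

end IsDihedralPair

end DihedralPair

section Neg

variable {G : Type*} [Group G] [HasDistribNeg G] {a b : G}

theorem neg_one_mem_center : (-1 : G) ∈ Subgroup.center G :=
  Subgroup.mem_center_iff.2 fun g => by simp

theorem neg_one_notMem_of_disjoint_center {H : Subgroup G}
    (hH : Disjoint H (Subgroup.center G)) (neg_one_ne_one : (-1 : G) ≠ 1) : -1 ∉ H :=
  fun neg_one_mem => neg_one_ne_one (Subgroup.disjoint_def.1 hH neg_one_mem neg_one_mem_center)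

theorem closure_neg_ne_closure (hb : b * b = 1) (neg_one_notMem : -1 ∉ Subgroup.closure {a, b}) :
    Subgroup.closure {a, -b} ≠ Subgroup.closure {a, b} := by
  intro closure_eq
  have neg_mem : -b ∈ Subgroup.closure {a, b} := closure_eq ▸ Subgroup.subset_closure (by simp)
  have mem : b ∈ Subgroup.closure {a, b} := Subgroup.subset_closure (by simp)
  exact neg_one_notMem (by simpa [hb] using mul_mem neg_mem mem)

end Neg

section GL2

open Matrix

variable {R : Type*} [CommRing R] {A B : GL (Fin 2) R} {n : ℕ} {u v b c : R}

theorem orderOf_eq_of_coe_eq_diagonal_pow {k : ℕ}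
    (hA : (A : Matrix (Fin 2) (Fin 2) R) = diagonal ![u, u ^ k]) : orderOf A = orderOf u := by
  rw [orderOf_eq_orderOf_iff]
  intro m
  rw [Units.ext_iff, Units.val_pow_eq_pow_val, hA, diagonal_pow, Units.val_one, diagonal_eq_one]
  constructor
  · exact fun h => congrFun h 0
  · intro hu
    ext i
    fin_cases i <;> simp [hu, pow_right_comm u k]

theorem semiconjBy_inv_of_coe_eq_diagonal
    (hA : (A : Matrix (Fin 2) (Fin 2) R) = diagonal ![u, v]) (huv : u * v = 1)
    (hB : (B : Matrix (Fin 2) (Fin 2) R) = !![0, b; c, 0]) : SemiconjBy B A A⁻¹ := by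
  have b_scaled : u * (b * v) = b := by rw [mul_left_comm, huv, mul_one]
  have c_scaled : v * (c * u) = c := by rw [mul_left_comm, mul_comm v, huv, mul_one]
  rw [SemiconjBy, eq_inv_mul_iff_mul_eq, Units.ext_iff, Units.val_mul, Units.val_mul, hA, hB]
  ext i j
  simp only [diagonal_mul, mul_diagonal]
  fin_cases i <;> fin_cases j <;> simp [b_scaled, c_scaled]

theorem mul_self_eq_one_of_coe_eq_antidiagonal
    (hB : (B : Matrix (Fin 2) (Fin 2) R) = !![0, b; c, 0]) (hbc : b * c = 1) : B * B = 1 := by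
  rw [Units.ext_iff, Units.val_mul, hB, Units.val_one, one_fin_two]
  simp [hbc, mul_comm c b]

theorem isDihedralPair_of_coe_eq
    (hA : (A : Matrix (Fin 2) (Fin 2) R) = diagonal ![u, v]) (huv : u * v = 1) (hAn : A ^ n = 1)
    (hB : (B : Matrix (Fin 2) (Fin 2) R) = !![0, b; c, 0]) (hbc : b * c = 1) :
    IsDihedralPair n A B :=
  ⟨hAn, mul_self_eq_one_of_coe_eq_antidiagonal hB hbc, semiconjBy_inv_of_coe_eq_diagonal hA huv hB⟩

end GL2

section PGL2

theorem neg_one_ne_one_GL2 : (-1 : GL (Fin 2) ℂ) ≠ 1 := by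
  intro h
  have := congrArg (fun g : GL (Fin 2) ℂ => g 0 0) h
  norm_num at this

theorem ker_projGL2 : projGL2.ker = Subgroup.center (GL (Fin 2) ℂ) :=
  QuotientGroup.ker_mk' _

theorem projGL2_neg (g : GL (Fin 2) ℂ) : projGL2 (-g) = projGL2 g := by
  have : projGL2 (-1) = 1 := ker_projGL2.ge neg_one_mem_center
  rw [← neg_one_mul, map_mul, this, one_mul]

theorem map_projGL2_closure_neg (A B : GL (Fin 2) ℂ) :
    (Subgroup.closure {A, -B}).map projGL2 = (Subgroup.closure {A, B}).map projGL2 := by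
  simp only [MonoidHom.map_closure, Set.image_pair, projGL2_neg]

theorem eq_one_of_projGL2_eq_one {H : Subgroup (GL (Fin 2) ℂ)}
    (hH : Disjoint H (Subgroup.center (GL (Fin 2) ℂ))) : ∀ g ∈ H, projGL2 g = 1 → g = 1 :=
  fun _ hg hproj => Subgroup.disjoint_def.1 hH hg (ker_projGL2.le hproj)

end PGL2

section PolyComp

open MvPolynomial

theorem polyComp_eq_bind₁ (g : GL (Fin 2) ℂ) (β : MvPolynomial (Fin 2) ℂ) :
    polyComp g β = bind₁ (Matrix.toMvPolynomial (g : Matrix (Fin 2) (Fin 2) ℂ)) β := by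
  simp only [polyComp, bind₁, C_mul_X_eq_monomial]
  rfl

theorem polyComp_one (β : MvPolynomial (Fin 2) ℂ) : polyComp 1 β = β := by
  simp [polyComp_eq_bind₁]

theorem polyComp_mul (g h : GL (Fin 2) ℂ) (β : MvPolynomial (Fin 2) ℂ) :
    polyComp (g * h) β = polyComp h (polyComp g β) := by
  rw [polyComp_eq_bind₁, polyComp_eq_bind₁, polyComp_eq_bind₁, bind₁_bind₁, Units.val_mul]
  exact congrArg (bind₁ · β) (funext fun i => Matrix.toMvPolynomial_mul _ _ i)

/-- The group of linear substitutions that leave the polynomial `β` unchanged. As `polyComp` is a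
right action, it is not a `MulAction.stabilizer`. -/
def polyCompStabilizer (β : MvPolynomial (Fin 2) ℂ) : Subgroup (GL (Fin 2) ℂ) where
  carrier := {g | polyComp g β = β}
  one_mem' := polyComp_one β
  mul_mem' {g h} (hg : _ = _) (hh : _ = _) := by rw [Set.mem_ofPred, polyComp_mul, hg, hh]
  inv_mem' {g} (hg : _ = _) := by
    rw [Set.mem_ofPred]
    nth_rw 1 [← hg]
    rw [← polyComp_mul, mul_inv_cancel, polyComp_one]

variable {g : GL (Fin 2) ℂ} {β : MvPolynomial (Fin 2) ℂ} {a b : ℂ}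

theorem mem_polyCompStabilizer : g ∈ polyCompStabilizer β ↔ polyComp g β = β :=
  Iff.rfl

theorem polyComp_eq_of_mem_closure {S : Set (GL (Fin 2) ℂ)}
    (hS : S ⊆ polyCompStabilizer β) (hg : g ∈ Subgroup.closure S) : polyComp g β = β :=
  (Subgroup.closure_le _).2 hS hg

theorem polyComp_bolzaSextic (g : GL (Fin 2) ℂ) :
    polyComp g bolzaSextic =
      ((C (g 0 0) * X 0 + C (g 0 1) * X 1) ^ 3 - 2 * (C (g 1 0) * X 0 + C (g 1 1) * X 1) ^ 3) *
      ((C (g 1 0) * X 0 + C (g 1 1) * X 1) ^ 3 - 2 * (C (g 0 0) * X 0 + C (g 0 1) * X 1) ^ 3) := by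
  simp only [polyComp, bolzaSextic, map_mul, map_sub, map_pow, map_ofNat, aeval_X,
    Fin.sum_univ_two]

theorem mem_polyCompStabilizer_bolzaSextic_of_diagonal
    (hg : (g : Matrix (Fin 2) (Fin 2) ℂ) = Matrix.diagonal ![a, b]) (hab : a ^ 3 = b ^ 3)
    (hb : b ^ 6 = 1) : g ∈ polyCompStabilizer bolzaSextic := by
  have C_cube : (C a : MvPolynomial (Fin 2) ℂ) ^ 3 = C b ^ 3 := by rw [← C_pow, hab, C_pow]
  calc
    polyComp g bolzaSextic
      = (C a ^ 3 * X 0 ^ 3 - 2 * (C b ^ 3 * X 1 ^ 3)) *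
          (C b ^ 3 * X 1 ^ 3 - 2 * (C a ^ 3 * X 0 ^ 3)) := by
        simp [polyComp_bolzaSextic, hg, mul_pow]
    _ = C b ^ 6 * bolzaSextic := by rw [C_cube, bolzaSextic]; ring
    _ = bolzaSextic := by rw [← C_pow, hb, C_1, one_mul]

theorem mem_polyCompStabilizer_bolzaSextic_of_antidiagonal
    (hg : (g : Matrix (Fin 2) (Fin 2) ℂ) = !![0, a; b, 0]) (hab : a ^ 3 = b ^ 3)
    (hb : b ^ 6 = 1) : g ∈ polyCompStabilizer bolzaSextic := by
  have C_cube : (C a : MvPolynomial (Fin 2) ℂ) ^ 3 = C b ^ 3 := by rw [← C_pow, hab, C_pow]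
  calc
    polyComp g bolzaSextic
      = (C a ^ 3 * X 1 ^ 3 - 2 * (C b ^ 3 * X 0 ^ 3)) *
          (C b ^ 3 * X 0 ^ 3 - 2 * (C a ^ 3 * X 1 ^ 3)) := by
        simp [polyComp_bolzaSextic, hg, mul_pow]
    _ = C b ^ 6 * bolzaSextic := by rw [C_cube, bolzaSextic]; ring
    _ = bolzaSextic := by rw [← C_pow, hb, C_1, one_mul]

end PolyComp

/-- Let `ξ = e^{2πi/3}`, `A = diag(ξ, ξ²)`, `B₁ = [[0,−1],[−1,0]]`, `B₂ = [[0,1],[1,0]]`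
and `G₁ = ⟨A, B₁⟩`, `G₂ = ⟨A, B₂⟩`.  Then `G₁` and `G₂` are each isomorphic to `S₃`,
`G₁ ≠ G₂`, neither contains `−Id` (so `π` is injective on each), `π(G₁) = π(G₂)`, and
`β ∘ g = β` for `β = (x₀³ − 2x₁³)(x₁³ − 2x₀³)` and every `g ∈ G₁ ∪ G₂`. -/
theorem two_liftings_D3 (A B₁ B₂ : GL (Fin 2) ℂ)
    (hA : (A : Matrix (Fin 2) (Fin 2) ℂ) = Matrix.diagonal
      ![Complex.exp (2 * Real.pi * Complex.I / 3), Complex.exp (2 * Real.pi * Complex.I / 3) ^ 2])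
    (hB₁ : (B₁ : Matrix (Fin 2) (Fin 2) ℂ) = !![0, -1; -1, 0])
    (hB₂ : (B₂ : Matrix (Fin 2) (Fin 2) ℂ) = !![0, 1; 1, 0]) :
    Nonempty ((Subgroup.closure {A, B₁} : Subgroup (GL (Fin 2) ℂ)) ≃* Equiv.Perm (Fin 3)) ∧
    Nonempty ((Subgroup.closure {A, B₂} : Subgroup (GL (Fin 2) ℂ)) ≃* Equiv.Perm (Fin 3)) ∧
    Subgroup.closure {A, B₁} ≠ Subgroup.closure {A, B₂} ∧
    (-1 : GL (Fin 2) ℂ) ∉ Subgroup.closure {A, B₁} ∧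
    (-1 : GL (Fin 2) ℂ) ∉ Subgroup.closure {A, B₂} ∧
    (∀ g ∈ Subgroup.closure {A, B₁}, projGL2 g = 1 → g = 1) ∧
    (∀ g ∈ Subgroup.closure {A, B₂}, projGL2 g = 1 → g = 1) ∧
    Subgroup.map projGL2 (Subgroup.closure {A, B₁}) =
      Subgroup.map projGL2 (Subgroup.closure {A, B₂}) ∧
    (∀ g : GL (Fin 2) ℂ, g ∈ Subgroup.closure {A, B₁} ∨ g ∈ Subgroup.closure {A, B₂} →
      polyComp g bolzaSextic = bolzaSextic) := by
  have hξ : IsPrimitiveRoot (Complex.exp (2 * Real.pi * Complex.I / 3)) 3 :=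
    mod_cast Complex.isPrimitiveRoot_exp 3 three_ne_zero
  generalize Complex.exp (2 * Real.pi * Complex.I / 3) = ξ at hA hξ
  have A_order : orderOf A = 3 := (orderOf_eq_of_coe_eq_diagonal_pow hA).trans hξ.eq_orderOf.symm
  have A_cube : A ^ 3 = 1 := A_order ▸ pow_orderOf_eq_one A
  have ξ_mul_sq : ξ * ξ ^ 2 = 1 := by rw [← pow_succ', hξ.pow_eq_one]
  have pair₁ : IsDihedralPair 3 A B₁ := isDihedralPair_of_coe_eq hA ξ_mul_sq A_cube hB₁ (by simp)
  have pair₂ : IsDihedralPair 3 A B₂ := isDihedralPair_of_coe_eq hA ξ_mul_sq A_cube hB₂ (by simp)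
  have disj₁ := pair₁.disjoint_closure_center A_order (by decide) (by decide)
  have disj₂ := pair₂.disjoint_closure_center A_order (by decide) (by decide)
  have B₁_eq : B₁ = -B₂ := Units.ext (by simp [hB₁, hB₂])
  have A_mem : A ∈ polyCompStabilizer bolzaSextic :=
    mem_polyCompStabilizer_bolzaSextic_of_diagonal hA (by simp [pow_right_comm ξ 2, hξ.pow_eq_one])
      (by simp [← pow_mul, hξ.pow_eq_one_iff_dvd])
  have B₁_mem := mem_polyCompStabilizer_bolzaSextic_of_antidiagonal hB₁ rfl (by norm_num)
  have B₂_mem := mem_polyCompStabilizer_bolzaSextic_of_antidiagonal hB₂ rfl (by norm_num)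
  have neg_one_notMem₂ := neg_one_notMem_of_disjoint_center disj₂ neg_one_ne_one_GL2
  exact ⟨⟨(pair₁.closureEquiv A_order (by decide)).trans dihedralGroupThreeEquivPerm⟩,
    ⟨(pair₂.closureEquiv A_order (by decide)).trans dihedralGroupThreeEquivPerm⟩,
    B₁_eq ▸ closure_neg_ne_closure pair₂.mul_self_eq_one neg_one_notMem₂,
    neg_one_notMem_of_disjoint_center disj₁ neg_one_ne_one_GL2, neg_one_notMem₂,
    eq_one_of_projGL2_eq_one disj₁, eq_one_of_projGL2_eq_one disj₂,
    B₁_eq ▸ map_projGL2_closure_neg A B₂,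
    fun g hg => hg.elim (polyComp_eq_of_mem_closure (Set.pair_subset A_mem B₁_mem))
      (polyComp_eq_of_mem_closure (Set.pair_subset A_mem B₂_mem))⟩
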